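/- There exists δ > 0 such that for all real u, v with |u|, |v| < δ, the series ∑_{k ≥ n+1, n ≥ 1} t(k−n+1, {1}^{n−1}) u^{k−n−1} v^{n−1} converges absolutely and equals (1/(1−u)) · ₃F₂((1−u)/2, (1+v)/2, 1; (3−u)/2, 3/2; 1). -/

import Mathlib

open scoped BigOperators

/-- The multiple `t`-value of an index `K = (k₁, …, kₙ)` (a list of positive integers):
`t(K) = ∑_{m₁ > ⋯ > mₙ > 0, all mᵢ odd} 1 / (m₁^{k₁} ⋯ mₙ^{kₙ})`. -/
noncomputable def multT (K : List ℕ) : ℝ :=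
  ∑' m : Fin K.length → ℕ,
    if (∀ i, Odd (m i)) ∧ (∀ i j : Fin K.length, i < j → m j < m i) then
      ∏ i, ((m i : ℝ) ^ K.get i)⁻¹
    else 0

/-- The multiple `t`-star value of an index `K = (k₁, …, kₙ)`:
`t*(K) = ∑_{m₁ ≥ ⋯ ≥ mₙ > 0, all mᵢ odd} 1 / (m₁^{k₁} ⋯ mₙ^{kₙ})`. -/
noncomputable def multTStar (K : List ℕ) : ℝ :=
  ∑' m : Fin K.length → ℕ,
    if (∀ i, Odd (m i)) ∧ (∀ i j : Fin K.length, i < j → m j ≤ m i) then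
      ∏ i, ((m i : ℝ) ^ K.get i)⁻¹
    else 0

/-- An index (list of positive integers) is admissible if its first entry is `> 1`. -/
def Admissible (K : List ℕ) : Prop := (∀ i ∈ K, 1 ≤ i) ∧ 2 ≤ K.headI

instance : DecidablePred Admissible := fun K =>
  inferInstanceAs (Decidable ((∀ i ∈ K, 1 ≤ i) ∧ 2 ≤ K.headI))

/-- `G0h k n s` is the sum of multiple `t`-values over all admissible indices of
weight `k`, depth `n` and height `s`. -/
noncomputable def G0h (k n s : ℕ) : ℝ :=
  ∑' K : List ℕ,
    if Admissible K ∧ K.sum = k ∧ K.length = n ∧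
        K.countP (fun i => decide (2 ≤ i)) = s then
      multT K
    else 0

/-- `G0hStar k n s` is the sum of multiple `t`-star values over all admissible indices of
weight `k`, depth `n` and height `s`. -/
noncomputable def G0hStar (k n s : ℕ) : ℝ :=
  ∑' K : List ℕ,
    if Admissible K ∧ K.sum = k ∧ K.length = n ∧
        K.countP (fun i => decide (2 ≤ i)) = s then
      multTStar K
    else 0

/-- `G0d k n` is the sum of multiple `t`-values over all admissible indices of
weight `k` and depth `n`. -/
noncomputable def G0d (k n : ℕ) : ℝ :=
  ∑' K : List ℕ,
    if Admissible K ∧ K.sum = k ∧ K.length = n then multT K else 0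

/-- `G0dStar k n` is the sum of multiple `t`-star values over all admissible indices of
weight `k` and depth `n`. -/
noncomputable def G0dStar (k n : ℕ) : ℝ :=
  ∑' K : List ℕ,
    if Admissible K ∧ K.sum = k ∧ K.length = n then multTStar K else 0

/-- The single `t`-value `t(n) = ∑_{m odd, m > 0} 1 / m^n`. -/
noncomputable def tval (n : ℕ) : ℝ := ∑' m : ℕ, 1 / (2 * (m : ℝ) + 1) ^ n

/-- The ascending Pochhammer symbol `(a)ₙ = a (a+1) ⋯ (a+n-1)`. -/
noncomputable def poch (a : ℂ) (n : ℕ) : ℂ := ∏ i ∈ Finset.range n, (a + i)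

/-- The generalized hypergeometric function `₃F₂(a, b, c; d, e; z)`. -/
noncomputable def hyp3F2 (a b c d e z : ℂ) : ℂ :=
  ∑' n : ℕ, poch a n * poch b n * poch c n /
      ((n.factorial : ℂ) * poch d n * poch e n) * z ^ n

/-- The generalized hypergeometric function with upper parameters `as` and lower
parameters `bs`. -/
noncomputable def hypF (as bs : List ℂ) (z : ℂ) : ℂ :=
  ∑' n : ℕ, (as.map fun a => poch a n).prod /
      ((n.factorial : ℂ) * (bs.map fun b => poch b n).prod) * z ^ n

/-- The one-variable multiple polylogarithm
`L_K(z) = ∑_{m₁ > ⋯ > mₙ > 0, all mᵢ odd} z^{m₁} / (m₁^{k₁} ⋯ mₙ^{kₙ})`. -/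
noncomputable def Lt (K : List ℕ) (z : ℝ) : ℝ :=
  ∑' m : Fin K.length → ℕ,
    if h : (∀ i, Odd (m i)) ∧ (∀ i j : Fin K.length, i < j → m j < m i) ∧
        0 < K.length then
      z ^ (m ⟨0, h.2.2⟩) * ∏ i, ((m i : ℝ) ^ K.get i)⁻¹
    else 0

/-- The one-variable star multiple polylogarithm
`L*_K(z) = ∑_{m₁ ≥ ⋯ ≥ mₙ > 0, all mᵢ odd} z^{m₁} / (m₁^{k₁} ⋯ mₙ^{kₙ})`. -/
noncomputable def LtStar (K : List ℕ) (z : ℝ) : ℝ :=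
  ∑' m : Fin K.length → ℕ,
    if h : (∀ i, Odd (m i)) ∧ (∀ i j : Fin K.length, i < j → m j ≤ m i) ∧
        0 < K.length then
      z ^ (m ⟨0, h.2.2⟩) * ∏ i, ((m i : ℝ) ^ K.get i)⁻¹
    else 0

/-- `G0hz k n s z` is the sum of `L_K(z)` over all admissible indices `K` of
weight `k`, depth `n` and height `s`. -/
noncomputable def G0hz (k n s : ℕ) (z : ℝ) : ℝ :=
  ∑' K : List ℕ,
    if Admissible K ∧ K.sum = k ∧ K.length = n ∧
        K.countP (fun i => decide (2 ≤ i)) = s then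
      Lt K z
    else 0

/-- `G0hzStar k n s z` is the sum of `L*_K(z)` over all admissible indices `K` of
weight `k`, depth `n` and height `s`. -/
noncomputable def G0hzStar (k n s : ℕ) (z : ℝ) : ℝ :=
  ∑' K : List ℕ,
    if Admissible K ∧ K.sum = k ∧ K.length = n ∧
        K.countP (fun i => decide (2 ≤ i)) = s then
      LtStar K z
    else 0

/-!
Group the multiple sums by the outermost variable `m₁ = 2 N + 1`. What remains of the entries
`{1}ⁿ` is the `n`-th elementary symmetric function of `1, 1/3, …, 1/(2 N - 1)`, so summing over `n`
against `vⁿ` gives `∏_{j < N} (1 + v / (2 j + 1)) = ((1 + v) / 2)_N / (1 / 2)_N`. Summing over the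
first exponent is a geometric series with value `1 / ((2 N + 1) (2 N + 1 - u))`, itself a ratio of
Pochhammer symbols, and the product of the two is the `N`-th term of the `₃F₂` series.

The interchange of summations needs absolute convergence for `‖u‖ < 1` and `‖v‖ < 2`. With
`P_N = ∏_{j < N} (1 + v / (2 j + 1))` it comes from the telescoping identity
`(2 - v) P_N / ((2 N + 1) (2 N + 3)) = P_N / (2 N + 1) - P_{N + 1} / (2 N + 3)`.
-/

theorem hasSum_prod_iff_of_nonneg {α β : Type*} {f : α × β → ℝ} {g : α → ℝ} {s : ℝ}
    (hf : 0 ≤ f) (hg : ∀ a, HasSum (fun b => f (a, b)) (g a)) : HasSum f s ↔ HasSum g s := by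
  refine ⟨fun h => h.prod_fiberwise hg, fun h => ?_⟩
  have hfs : Summable f := (summable_prod_of_nonneg hf).2
    ⟨fun a => (hg a).summable, by simpa only [(hg _).tsum_eq] using h.summable⟩
  simpa only [h.unique (hfs.hasSum.prod_fiberwise hg)] using hfs.hasSum

theorem hasSum_fin_cons_iff_of_nonneg {n : ℕ} {α : Type*} {f : (Fin (n + 1) → α) → ℝ} {g : α → ℝ}
    {s : ℝ} (hf : 0 ≤ f) (hg : ∀ x, HasSum (fun a : Fin n → α => f (Fin.cons x a)) (g x)) :
    HasSum f s ↔ HasSum g s := by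
  rw [← (Fin.consEquiv fun _ : Fin (n + 1) => α).hasSum_iff]
  exact hasSum_prod_iff_of_nonneg (fun _ => hf _) hg

theorem strictAnti_cons_iff {n : ℕ} {α : Type*} [Preorder α] {x : α} {a : Fin n → α} :
    StrictAnti (Fin.cons x a : Fin (n + 1) → α) ↔ (∀ i, a i < x) ∧ StrictAnti a :=
  Fin.strictMono_cons (α := αᵒᵈ)

open Classical in
/-- The summand of `t(K)` at the odd numbers `mᵢ = 2 aᵢ + 1`. -/
noncomputable def multTSummand (K : List ℕ) (a : Fin K.length → ℕ) : ℝ :=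
  if StrictAnti a then ∏ i, ((2 * (a i : ℝ) + 1) ^ K.get i)⁻¹ else 0

/-- The truncation of `t(K)` to `m₁ < 2 N + 1`, as an iterated sum over `mᵢ = 2 j + 1`. -/
noncomputable def truncMultT : List ℕ → ℕ → ℝ
  | [], _ => 1
  | k :: K, N => ∑ j ∈ Finset.range N, ((2 * (j : ℝ) + 1) ^ k)⁻¹ * truncMultT K j

theorem multTSummand_nonneg (K : List ℕ) : 0 ≤ multTSummand K := fun a => by
  unfold multTSummand
  split_ifs
  exacts [Finset.prod_nonneg fun i _ => by positivity, le_rfl]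

theorem truncMultT_nonneg (K : List ℕ) (N : ℕ) : 0 ≤ truncMultT K N := by
  induction K generalizing N with
  | nil => exact zero_le_one
  | cons k K ih => exact Finset.sum_nonneg fun j _ => mul_nonneg (by positivity) (ih j)

theorem tsum_multTSummand (K : List ℕ) : ∑' a, multTSummand K a = multT K := by
  classical
  let odd (a : Fin K.length → ℕ) (i : Fin K.length) : ℕ := 2 * a i + 1
  have odd_injective : Function.Injective odd := fun a b h => funext fun i => by
    have := congrFun h i
    simp only [odd] at this
    omega
  rw [multT]
  refine Eq.trans (tsum_congr fun a => ?_) (odd_injective.tsum_eq fun m hm => ?_)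
  · simp [multTSummand, odd, StrictAnti]
  · have hodd : ∀ i, Odd (m i) := by
      by_contra h
      exact hm (if_neg fun hm => h hm.1)
    choose a ha using hodd
    exact ⟨a, funext fun i => (ha i).symm⟩

theorem multTSummand_cons (k : ℕ) (K : List ℕ) (j : ℕ) (a : Fin K.length → ℕ) :
    multTSummand (k :: K) (Fin.cons j a : Fin (K.length + 1) → ℕ) =
      ((2 * (j : ℝ) + 1) ^ k)⁻¹ * {a | ∀ i, a i < j}.indicator (multTSummand K) a := by
  unfold multTSummand
  simp only [List.length_cons, strictAnti_cons_iff, Fin.prod_univ_succ, ite_and, Set.indicator,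
    Set.mem_ofPred_eq]
  split_ifs <;> simp

theorem indicator_multTSummand_cons (k : ℕ) (K : List ℕ) (N j : ℕ) (a : Fin K.length → ℕ) :
    {a | ∀ i, a i < N}.indicator (multTSummand (k :: K))
        (Fin.cons j a : Fin (K.length + 1) → ℕ) =
      (if j < N then ((2 * (j : ℝ) + 1) ^ k)⁻¹ else 0) *
        {a | ∀ i, a i < j}.indicator (multTSummand K) a := by
  rw [Set.indicator_apply, multTSummand_cons]
  by_cases hj : j < N
  · by_cases ha : ∀ i, a i < j
    · simp [Fin.forall_fin_succ, hj, ha, fun i => (ha i).trans hj]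
    · simp [ha]
  · simp [Fin.forall_fin_succ, hj]

theorem hasSum_indicator_multTSummand (K : List ℕ) (N : ℕ) :
    HasSum ({a | ∀ i, a i < N}.indicator (multTSummand K)) (truncMultT K N) := by
  induction K generalizing N with
  | nil =>
    have summand_eq_one : {a | ∀ i, a i < N}.indicator (multTSummand []) = fun _ => 1 := by
      ext a
      simp [multTSummand, Subsingleton.strictAnti]
    rw [summand_eq_one]
    exact hasSum_unique (β := Fin 0 → ℕ) fun _ => 1
  | cons k K ih =>
    refine (hasSum_fin_cons_iff_of_nonneg (n := K.length)
      (f := {a | ∀ i, a i < N}.indicator (multTSummand (k :: K)))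
      (g := fun j => (if j < N then ((2 * (j : ℝ) + 1) ^ k)⁻¹ else 0) * truncMultT K j)
      (Set.indicator_nonneg fun a _ => multTSummand_nonneg (k :: K) a) fun j => ?_).2 ?_
    · exact (funext fun a => indicator_multTSummand_cons k K N j a) ▸ (ih j).mul_left _
    · have hsum : truncMultT (k :: K) N = ∑ j ∈ Finset.range N,
          (if j < N then ((2 * (j : ℝ) + 1) ^ k)⁻¹ else 0) * truncMultT K j :=
        Finset.sum_congr rfl fun j hj => by rw [if_pos (Finset.mem_range.1 hj)]
      rw [hsum]
      exact hasSum_sum_of_ne_finset_zero fun j hj => by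
        rw [if_neg (mt Finset.mem_range.2 hj), zero_mul]

-- When the series diverges, both sides are the junk value `0`.
theorem multT_cons (k : ℕ) (K : List ℕ) :
    multT (k :: K) = ∑' j : ℕ, ((2 * (j : ℝ) + 1) ^ k)⁻¹ * truncMultT K j := by
  rw [← tsum_multTSummand]
  refine tsum_eq_tsum_of_hasSum_iff_hasSum <| hasSum_fin_cons_iff_of_nonneg (n := K.length)
    (multTSummand_nonneg (k :: K)) fun j => ?_
  simp_rw [multTSummand_cons]
  exact (hasSum_indicator_multTSummand K j).mul_left _

/-- The finite product `∏_{j < N} (1 + v / (2 j + 1))`, equal to `((1 + v) / 2)_N / (1 / 2)_N`. -/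
def oddProd {𝕜 : Type*} [Field 𝕜] (v : 𝕜) (N : ℕ) : 𝕜 :=
  ∏ j ∈ Finset.range N, (1 + v * (2 * (j : 𝕜) + 1)⁻¹)

theorem oddProd_succ {𝕜 : Type*} [Field 𝕜] (v : 𝕜) (N : ℕ) :
    oddProd v (N + 1) = oddProd v N * (1 + v * (2 * (N : 𝕜) + 1)⁻¹) :=
  Finset.prod_range_succ _ _

theorem oddProd_nonneg {v : ℝ} (hv : 0 ≤ v) (N : ℕ) : 0 ≤ oddProd v N :=
  Finset.prod_nonneg fun _ _ => by positivity

theorem ofReal_oddProd (v : ℝ) (N : ℕ) : ((oddProd v N : ℝ) : ℂ) = oddProd (v : ℂ) N := by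
  simp [oddProd]

theorem hasSum_truncMultT_replicate_one_mul_pow (v : ℂ) (N : ℕ) :
    HasSum (fun n => (truncMultT (List.replicate n 1) N : ℂ) * v ^ n) (oddProd v N) := by
  induction N with
  | zero =>
    convert hasSum_single (f := fun n => (truncMultT (List.replicate n 1) 0 : ℂ) * v ^ n) 0
      fun n hn => ?_ using 1
    · simp [oddProd, truncMultT]
    · obtain ⟨n, rfl⟩ := Nat.exists_eq_succ_of_ne_zero hn
      simp [truncMultT, List.replicate_succ]
  | succ N ih =>
    have htail := (hasSum_nat_add_iff' 1).2 ih
    rw [← hasSum_nat_add_iff' 1]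
    convert htail.add (ih.mul_left (v * (2 * (N : ℂ) + 1)⁻¹)) using 1
    · ext n
      simp only [truncMultT, List.replicate_succ, Finset.sum_range_succ, pow_one]
      push_cast
      ring
    · simp only [oddProd_succ, Finset.range_one, Finset.sum_singleton, List.replicate_zero,
        truncMultT]
      ring

theorem summable_oddProd_div {v : ℝ} (hv₀ : 0 ≤ v) (hv₂ : v < 2) :
    Summable fun N : ℕ => oddProd v N / ((2 * N + 1) * (2 * N + 3)) := by
  refine summable_of_sum_range_le (c := 1 / (2 - v))
    (fun N => div_nonneg (oddProd_nonneg hv₀ N) (by positivity)) fun n => ?_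
  let f (N : ℕ) : ℝ := oddProd v N / (2 * N + 1)
  have telescope (N : ℕ) :
      oddProd v N / ((2 * N + 1) * (2 * N + 3)) * (2 - v) = f N - f (N + 1) := by
    have : 2 * ((N : ℝ) + 1) + 1 ≠ 0 := by positivity
    simp only [f, oddProd_succ]
    push_cast
    field_simp
    ring
  rw [le_div_iff₀ (sub_pos.2 hv₂), Finset.sum_mul, Finset.sum_congr rfl fun N _ => telescope N,
    Finset.sum_range_sub']
  have : 0 ≤ f n := div_nonneg (oddProd_nonneg hv₀ n) (by positivity)
  have : f 0 = 1 := by simp [f, oddProd]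
  linarith

theorem hasSum_inv_pow_mul_pow {𝕜 : Type*} [NormedField 𝕜] {z w : 𝕜} (h : ‖w‖ < ‖z‖) :
    HasSum (fun a : ℕ => (z ^ (a + 2))⁻¹ * w ^ a) (z⁻¹ * (z - w)⁻¹) := by
  have hz : z ≠ 0 := norm_pos_iff.1 ((norm_nonneg w).trans_lt h)
  have hzw : z - w ≠ 0 := sub_ne_zero.2 fun e => h.ne (by rw [e])
  have hgeom : HasSum (fun a : ℕ => (w / z) ^ a) (1 - w / z)⁻¹ :=
    hasSum_geometric_of_norm_lt_one (by rwa [norm_div, div_lt_one (norm_pos_iff.2 hz)])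
  have hterm (a : ℕ) : (z ^ (a + 2))⁻¹ * w ^ a = (z ^ 2)⁻¹ * (w / z) ^ a := by
    rw [div_pow, pow_add]
    field_simp
  have hvalue : z⁻¹ * (z - w)⁻¹ = (z ^ 2)⁻¹ * (1 - w / z)⁻¹ := by
    rw [one_sub_div hz, inv_div]
    field_simp
  simpa only [hterm, hvalue] using hgeom.mul_left (z ^ 2)⁻¹

theorem norm_two_mul_add_one (N : ℕ) : ‖2 * (N : ℂ) + 1‖ = 2 * N + 1 := by
  exact_mod_cast Complex.norm_natCast (2 * N + 1)

theorem norm_lt_norm_two_mul_add_one {u : ℂ} (hu : ‖u‖ < 1) (N : ℕ) :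
    ‖u‖ < ‖2 * (N : ℂ) + 1‖ := by
  have := N.cast_nonneg (α := ℝ)
  rw [norm_two_mul_add_one]
  linarith

/-- The general term of the triple series obtained by expanding the outermost sum, over
`m₁ = 2 N + 1`, in the generating function of the height-one values; the index is `(N, a, n)` for
the term of `t(a + 2, {1}ⁿ)`. -/
noncomputable def heightOneTerm (u v : ℂ) (x : ℕ × ℕ × ℕ) : ℂ :=
  ((2 * (x.1 : ℂ) + 1) ^ (x.2.1 + 2))⁻¹ * u ^ x.2.1 *
    (truncMultT (List.replicate x.2.2 1) x.1 * v ^ x.2.2)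

theorem norm_heightOneTerm (u v : ℂ) (x : ℕ × ℕ × ℕ) :
    (‖heightOneTerm u v x‖ : ℂ) = heightOneTerm ‖u‖ ‖v‖ x := by
  simp [heightOneTerm, norm_two_mul_add_one, abs_of_nonneg (truncMultT_nonneg _ _)]

theorem hasSum_heightOneTerm_fiber {u : ℂ} (hu : ‖u‖ < 1) (v : ℂ) (N : ℕ) :
    HasSum (fun p => heightOneTerm u v (N, p))
      ((2 * (N : ℂ) + 1)⁻¹ * (2 * (N : ℂ) + 1 - u)⁻¹ * oddProd v N) := by
  have hgeom := hasSum_inv_pow_mul_pow (norm_lt_norm_two_mul_add_one hu N)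
  have hprod := hasSum_truncMultT_replicate_one_mul_pow v N
  have hsummable :=
    (summable_mul_of_summable_norm hgeom.summable.norm hprod.summable.norm :)
  exact (hgeom.mul hprod hsummable :)

theorem summable_inv_mul_inv_mul_oddProd {u v : ℝ} (hu₀ : 0 ≤ u) (hu₁ : u < 1) (hv₀ : 0 ≤ v)
    (hv₂ : v < 2) :
    Summable fun N : ℕ => (2 * (N : ℝ) + 1)⁻¹ * (2 * (N : ℝ) + 1 - u)⁻¹ * oddProd v N := by
  refine .of_nonneg_of_le (fun N => ?_) (fun N => ?_)
    ((summable_oddProd_div hv₀ hv₂).mul_left (3 / (1 - u)))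
  all_goals
    have hP := oddProd_nonneg hv₀ N
    have hNu : 0 < 2 * (N : ℝ) + 1 - u := by linarith [N.cast_nonneg (α := ℝ)]
  · positivity
  · have : 0 < 1 - u := sub_pos.2 hu₁
    have hle : (2 * (N : ℝ) + 1 - u)⁻¹ ≤ 3 / ((1 - u) * (2 * N + 3)) := by
      rw [inv_eq_one_div, div_le_div_iff₀ hNu (by positivity)]
      nlinarith [mul_nonneg N.cast_nonneg hu₀, N.cast_nonneg (α := ℝ)]
    calc (2 * (N : ℝ) + 1)⁻¹ * (2 * (N : ℝ) + 1 - u)⁻¹ * oddProd v N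
        ≤ (2 * (N : ℝ) + 1)⁻¹ * (3 / ((1 - u) * (2 * N + 3))) * oddProd v N := by gcongr
      _ = 3 / (1 - u) * (oddProd v N / ((2 * N + 1) * (2 * N + 3))) := by field_simp

theorem summable_heightOneTerm {u v : ℂ} (hu : ‖u‖ < 1) (hv : ‖v‖ < 2) :
    Summable (heightOneTerm u v) := by
  have hfiber (N : ℕ) : HasSum (fun p => ‖heightOneTerm u v (N, p)‖)
      ((2 * (N : ℝ) + 1)⁻¹ * (2 * (N : ℝ) + 1 - ‖u‖)⁻¹ * oddProd ‖v‖ N) := by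
    rw [← Complex.hasSum_ofReal]
    push_cast [norm_heightOneTerm, ofReal_oddProd]
    exact hasSum_heightOneTerm_fiber (by simpa using hu) _ N
  have hsum := summable_inv_mul_inv_mul_oddProd (norm_nonneg u) hu (norm_nonneg v) hv
  have hnorm : HasSum (fun x => ‖heightOneTerm u v x‖) _ :=
    (hasSum_prod_iff_of_nonneg (fun _ => norm_nonneg _) hfiber).2 hsum.hasSum
  exact hnorm.summable.of_norm

theorem tsum_heightOneTerm (u v : ℂ) (p : ℕ × ℕ) :
    ∑' N, heightOneTerm u v (N, p) =
      multT ((p.1 + 2) :: List.replicate p.2 1) * u ^ p.1 * v ^ p.2 := by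
  rw [multT_cons, Complex.ofReal_tsum, ← tsum_mul_right, ← tsum_mul_right]
  refine tsum_congr fun N => ?_
  rw [heightOneTerm]
  push_cast
  ring

theorem mul_poch_add_one (a : ℂ) (N : ℕ) : a * poch (a + 1) N = poch a N * (a + N) := by
  have hleft : poch a (N + 1) = a * poch (a + 1) N := by
    rw [poch, poch, Finset.prod_range_succ', mul_comm]
    simp [← add_assoc, add_right_comm]
  rw [← hleft]
  exact Finset.prod_range_succ _ _

theorem poch_one (N : ℕ) : poch 1 N = N.factorial := by
  rw [← Finset.prod_range_add_one_eq_factorial, poch]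
  push_cast
  simp only [add_comm]

theorem poch_ne_zero {a : ℂ} (ha : ∀ k : ℕ, a + k ≠ 0) (N : ℕ) : poch a N ≠ 0 :=
  Finset.prod_ne_zero_iff.2 fun k _ => ha k

theorem poch_div_poch_add_one {a : ℂ} (ha : ∀ k : ℕ, a + k ≠ 0) (N : ℕ) :
    poch a N / poch (a + 1) N = a / (a + N) := by
  have ha' (k : ℕ) : a + 1 + k ≠ 0 := by
    have := ha (k + 1)
    push_cast at this
    rwa [add_assoc, add_comm 1]
  rw [div_eq_div_iff (poch_ne_zero ha' N) (ha N), mul_poch_add_one]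

theorem poch_one_sub_div_two_div {u : ℂ} (hu : ∀ k : ℕ, 2 * (k : ℂ) + 1 - u ≠ 0) (N : ℕ) :
    poch ((1 - u) / 2) N / poch ((3 - u) / 2) N = (1 - u) / (2 * N + 1 - u) := by
  have half (k : ℕ) : (1 - u) / 2 + k = (2 * k + 1 - u) / 2 := by ring
  rw [show (3 - u) / 2 = (1 - u) / 2 + 1 by ring,
    poch_div_poch_add_one fun k => half k ▸ div_ne_zero (hu k) two_ne_zero, half,
    div_div_div_cancel_right₀ two_ne_zero]

theorem poch_one_add_div_two (v : ℂ) (N : ℕ) :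
    poch ((1 + v) / 2) N = poch (1 / 2) N * oddProd v N := by
  rw [poch, poch, oddProd, ← Finset.prod_mul_distrib]
  refine Finset.prod_congr rfl fun k _ => ?_
  have : 2 * (k : ℂ) + 1 ≠ 0 := by exact_mod_cast (2 * k).succ_ne_zero
  field_simp
  ring

theorem inv_mul_hyp3F2_eq_tsum_oddProd {u : ℂ} (hu : ∀ k : ℕ, 2 * (k : ℂ) + 1 - u ≠ 0) (v : ℂ) :
    (1 - u)⁻¹ * hyp3F2 ((1 - u) / 2) ((1 + v) / 2) 1 ((3 - u) / 2) (3 / 2) 1 =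
      ∑' N : ℕ, (2 * (N : ℂ) + 1)⁻¹ * (2 * (N : ℂ) + 1 - u)⁻¹ * oddProd v N := by
  rw [hyp3F2, ← tsum_mul_left]
  refine tsum_congr fun N => ?_
  have hu₀ : 1 - u ≠ 0 := by simpa using hu 0
  have hfac : (N.factorial : ℂ) ≠ 0 := by exact_mod_cast N.factorial_ne_zero
  have half_ratio : poch (1 / 2) N / poch (3 / 2) N = 1 / (2 * N + 1) := by
    simpa using poch_one_sub_div_two_div (u := 0)
      (fun k => by rw [sub_zero]; exact_mod_cast (2 * k).succ_ne_zero) N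
  calc _ = (1 - u)⁻¹ * (poch ((1 - u) / 2) N / poch ((3 - u) / 2) N) *
        (poch (1 / 2) N / poch (3 / 2) N) * oddProd v N := by
          rw [poch_one, poch_one_add_div_two, one_pow]
          field_simp
    _ = _ := by
      rw [poch_one_sub_div_two_div hu, half_ratio]
      field_simp

theorem height_one_multiple_t_general {u v : ℂ} (hu : ‖u‖ < 1) (hv : ‖v‖ < 2) :
    HasSum
      (fun p : ℕ × ℕ => (multT ((p.1 + 2) :: List.replicate p.2 1) : ℂ) * u ^ p.1 * v ^ p.2)
      ((1 - u)⁻¹ * hyp3F2 ((1 - u) / 2) ((1 + v) / 2) 1 ((3 - u) / 2) (3 / 2) 1) := by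
  have hsummable := summable_heightOneTerm hu hv
  have hu_ne (k : ℕ) : 2 * (k : ℂ) + 1 - u ≠ 0 :=
    sub_ne_zero.2 (ne_of_apply_ne norm (norm_lt_norm_two_mul_add_one hu k).ne')
  rw [inv_mul_hyp3F2_eq_tsum_oddProd hu_ne,
    (hsummable.hasSum.prod_fiberwise (hasSum_heightOneTerm_fiber hu v)).tsum_eq,
    ← (Equiv.prodComm _ _).tsum_eq]
  refine hsummable.prod_symm.hasSum.prod_fiberwise fun p => ?_
  rw [← tsum_heightOneTerm]
  exact (hsummable.prod_symm.prod_factor p).hasSum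

/-- Generating function of height-one multiple `t`-values (Corollary 2.1). -/
theorem height_one_multiple_t :
    ∃ δ > (0 : ℝ), ∀ u v : ℝ, |u| < δ → |v| < δ →
      Summable (fun p : ℕ × ℕ =>
        multT ((p.1 + 2) :: List.replicate p.2 1) * u ^ p.1 * v ^ p.2) ∧
      ((∑' p : ℕ × ℕ,
          multT ((p.1 + 2) :: List.replicate p.2 1) * u ^ p.1 * v ^ p.2 : ℝ) : ℂ)
        = (1 - (u : ℂ))⁻¹ *
            hyp3F2 ((1 - (u : ℂ)) / 2) ((1 + (v : ℂ)) / 2) 1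
              ((3 - (u : ℂ)) / 2) (3 / 2) 1 := by
  refine ⟨1, one_pos, fun u v hu hv => ?_⟩
  have h := height_one_multiple_t_general (u := u) (v := v) (by simpa)
    (by simpa using hv.trans one_lt_two)
  exact ⟨by exact_mod_cast h.summable, by exact_mod_cast h.tsum_eq⟩
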